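/- In the complex numbers, F(1/8,7/8) + 8i√2·F(7/8,9/8) = ζ₈·(2√2·F(3/8,5/8) + 4i·F(5/8,11/8)), where ζ₈ = e^{2πi/8}. -/

import Mathlib

/-- The Pochhammer symbol (x)_k = x(x+1)⋯(x+k−1). -/
noncomputable def poch (x : ℝ) (k : ℕ) : ℝ := ∏ i ∈ Finset.range k, (x + i)

/-- The hypergeometric series ₃F₂(a1,a2,a3;b1,b2;1). -/
noncomputable def threeF2 (a1 a2 a3 b1 b2 : ℝ) : ℝ :=
  ∑' k : ℕ, poch a1 k * poch a2 k * poch a3 k /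
    (poch b1 k * poch b2 k * (Nat.factorial k : ℝ))

/-- The Beta function B(a,b) = Γ(a)Γ(b)/Γ(a+b). -/
noncomputable def betaFn (a b : ℝ) : ℝ :=
  Real.Gamma a * Real.Gamma b / Real.Gamma (a + b)

/-- The normalized hypergeometric value
F(r,s) = (2^{1−4r}·B(r,s−r)/N(r)) · ₃F₂(1/2,1/2,r;1,s;1), where N(r) = 2·den(r). -/
noncomputable def Fval (r s : ℚ) : ℝ :=
  (2:ℝ) ^ ((1:ℝ) - 4 * (r:ℝ)) * betaFn (r:ℝ) ((s:ℝ) - (r:ℝ)) / (2 * (r.den : ℝ)) *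
    threeF2 (1/2) (1/2) (r:ℝ) 1 (s:ℝ)

/-!
Write `K` for the complete elliptic integral and, for `c = α + 1/2 - a`, compare the integrals of
`x ^ (a - 1) (1 - x) ^ (-α) K(x)` and `x ^ (c - 1) (1 - x) ^ (-α) K(x)`, each a multiple of a `₃F₂`
at `1`. Consider the double series with summands `(α)_n / n! ((1/2)_k / k!)²` times
`1 / (a + n + k) + 1 / (1/2 - a - n + k)`. Summed over `n` first, its two parts give these two
integrals, the second one by the reflection formula; summed over `k` first, it gives
`∑ (α)_n / n! (Γ(a + n) / Γ(a + n + 1/2))²`.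

Thomae's transformation carries the latter series to its analogue for the parameters `1 - α` and
`1 - c`, which is in turn a combination of two integrals against `(1 - x) ^ (α - 1)`. The outcome
is a linear relation between four values of `₃F₂`. For `c = a + 1/2` its Gamma factors collapse to
a power of `2`, and exchanging `a` and `c` gives a second relation. The two real relations, rotated
by the angle `π a`, are the real and imaginary parts of the claim.
-/

open MeasureTheory Set Filter Topology

/-! ### Binomial series, Gauss's theorem and partial fractions of the Beta function -/

theorem poch_succ (x : ℝ) (n : ℕ) : poch x (n + 1) = poch x n * (x + n) :=
  Finset.prod_range_succ _ _

theorem poch_pos {x : ℝ} (hx : 0 < x) (n : ℕ) : 0 < poch x n :=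
  Finset.prod_pos fun _ _ => by positivity

theorem poch_eq_ascPochhammer_eval (x : ℝ) (n : ℕ) : poch x n = (ascPochhammer ℝ n).eval x := by
  induction n with
  | zero => simp [poch]
  | succ n ih => rw [poch_succ, ascPochhammer_succ_eval, ih]

theorem poch_one (n : ℕ) : poch 1 n = n.factorial := by
  rw [poch_eq_ascPochhammer_eval, ascPochhammer_eval_one]

theorem Gamma_add_natCast {x : ℝ} (hx : 0 < x) (n : ℕ) :
    Real.Gamma (x + n) = poch x n * Real.Gamma x := by
  induction n with
  | zero => simp [poch]
  | succ n ih =>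
    rw [poch_succ, Nat.cast_succ, ← add_assoc, Real.Gamma_add_one (by positivity), ih]
    ring

/-- The coefficient `(α)_n / n!` of `x ^ n` in the power series of `(1 - x) ^ (-α)`. -/
noncomputable def pochCoeff (α : ℝ) (n : ℕ) : ℝ := poch α n / n.factorial

theorem pochCoeff_pos {α : ℝ} (hα : 0 < α) (n : ℕ) : 0 < pochCoeff α n :=
  div_pos (poch_pos hα n) (by positivity)

theorem pochCoeff_succ (α : ℝ) (n : ℕ) :
    pochCoeff α (n + 1) * (n + 1) = pochCoeff α n * (α + n) := by
  rw [pochCoeff, pochCoeff, poch_succ, Nat.factorial_succ]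
  push_cast
  field_simp

theorem ringChoose_eq_pochCoeff (α : ℝ) (n : ℕ) :
    Ring.choose (α + n - 1) n = pochCoeff α n := by
  rw [← Ring.multichoose_eq, pochCoeff, eq_div_iff (by positivity), poch_eq_ascPochhammer_eval,
    ← Polynomial.ascPochhammer_smeval_eq_eval, ← Ring.factorial_nsmul_multichoose_eq_ascPochhammer,
    nsmul_eq_mul, mul_comm]

theorem hasSum_pochCoeff_mul_pow (α : ℝ) {x : ℝ} (hx : |x| < 1) :
    HasSum (fun n : ℕ => pochCoeff α n * x ^ n) ((1 - x) ^ (-α)) := by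
  have h := (Real.one_div_one_sub_rpow_hasFPowerSeriesOnBall_zero α).hasSum (y := x)
    (by simpa [← ENNReal.ofReal_one, Metric.eball_ofReal] using hx)
  rw [zero_add, one_div, ← Real.rpow_neg (by linarith [le_abs_self x])] at h
  refine h.congr_fun fun n => ?_
  simp [ringChoose_eq_pochCoeff, mul_comm]

theorem one_sub_mul_le_one_add_rpow_neg {t β : ℝ} (ht : 0 ≤ t) (hβ : 0 ≤ β) :
    1 - β * t ≤ (1 + t) ^ (-β) :=
  calc 1 - β * t ≤ Real.exp (-(β * t)) := by linarith [Real.add_one_le_exp (-(β * t))]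
    _ = Real.exp t ^ (-β) := by rw [← Real.exp_mul]; ring_nf
    _ ≤ (1 + t) ^ (-β) := Real.rpow_le_rpow_of_nonpos (by positivity)
      (by linarith [Real.add_one_le_exp t]) (by linarith)

theorem pochCoeff_le_rpow {α : ℝ} (hα : 0 < α) (hα1 : α ≤ 1) (n : ℕ) :
    pochCoeff α n ≤ ((n : ℝ) + 1) ^ (α - 1) := by
  induction n with
  | zero => simp [pochCoeff, poch]
  | succ n ih =>
    have hn : (0 : ℝ) < n + 1 := by positivity
    have hc := (pochCoeff_pos hα n).le
    calc pochCoeff α (n + 1) = pochCoeff α n * (1 - (1 - α) * (1 / (n + 1))) := by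
          rw [← mul_left_inj' hn.ne', pochCoeff_succ]
          field_simp
          ring
      _ ≤ pochCoeff α n * (1 + 1 / (n + 1)) ^ (-(1 - α)) := by
          gcongr
          exact one_sub_mul_le_one_add_rpow_neg (by positivity) (by linarith)
      _ ≤ ((n : ℝ) + 1) ^ (α - 1) * (1 + 1 / (n + 1)) ^ (α - 1) := by
          rw [neg_sub]
          gcongr
      _ = (((n + 1 : ℕ) : ℝ) + 1) ^ (α - 1) := by
          rw [← Real.mul_rpow hn.le (by positivity)]
          push_cast
          field_simp

theorem pochCoeff_le_one {α : ℝ} (hα : 0 < α) (hα1 : α ≤ 1) (n : ℕ) : pochCoeff α n ≤ 1 :=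
  (pochCoeff_le_rpow hα hα1 n).trans
    (Real.rpow_le_one_of_one_le_of_nonpos (by simp) (by linarith))

theorem tendsto_pochCoeff_zero {α : ℝ} (hα : 0 < α) (hα1 : α < 1) :
    Tendsto (pochCoeff α) atTop (𝓝 0) := by
  have h := (tendsto_rpow_neg_atTop (sub_pos.2 hα1)).comp
    (tendsto_natCast_atTop_atTop.atTop_add (tendsto_const_nhds (x := (1 : ℝ))))
  refine squeeze_zero (fun n => (pochCoeff_pos hα n).le) (fun n => ?_) h
  simpa using pochCoeff_le_rpow hα hα1.le n

theorem summable_natCast_add_one_rpow {p : ℝ} (hp : p < -1) :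
    Summable fun n : ℕ => ((n : ℝ) + 1) ^ p := by
  simpa using (summable_nat_add_iff 1).2 (Real.summable_nat_rpow.2 hp)

theorem summable_pochCoeff_div_add {α : ℝ} (hα : 0 < α) (hα1 : α < 1) (y : ℝ) :
    Summable fun n : ℕ => pochCoeff α n / (y + n) := by
  obtain ⟨N, hN⟩ := exists_nat_ge (1 - y)
  rw [← summable_nat_add_iff N]
  refine (summable_natCast_add_one_rpow (p := α - 1 - 1) (by linarith)).of_nonneg_of_le
    (fun n => ?_) fun n => ?_
  · have := pochCoeff_pos hα (n + N)
    have : 0 < y + (n + N : ℕ) := by push_cast; linarith [n.cast_nonneg (α := ℝ)]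
    positivity
  · have hn : (0 : ℝ) < n + 1 := by positivity
    have hc : pochCoeff α (n + N) ≤ ((n : ℝ) + 1) ^ (α - 1) := by
      refine (pochCoeff_le_rpow hα hα1.le _).trans
        (Real.rpow_le_rpow_of_nonpos hn ?_ (by linarith))
      push_cast
      linarith [N.cast_nonneg (α := ℝ)]
    rw [Real.rpow_sub_one hn.ne']
    exact div_le_div₀ (by positivity) hc hn (by push_cast; linarith)

theorem betaFn_pos {α β : ℝ} (hα : 0 < α) (hβ : 0 < β) : 0 < betaFn α β :=
  ProbabilityTheory.beta_pos hα hβ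

theorem lintegral_rpow_mul_one_sub_rpow {α β : ℝ} (hα : 0 < α) (hβ : 0 < β) :
    ∫⁻ x in Ioo (0 : ℝ) 1, ENNReal.ofReal (x ^ (α - 1) * (1 - x) ^ (β - 1)) =
      ENNReal.ofReal (betaFn α β) := by
  have hB := betaFn_pos hα hβ
  have h : ENNReal.ofReal (betaFn α β)⁻¹ *
      ∫⁻ x in Ioo (0 : ℝ) 1, ENNReal.ofReal (x ^ (α - 1) * (1 - x) ^ (β - 1)) = 1 := by
    rw [← ProbabilityTheory.lintegral_betaPDF_eq_one hα hβ, ProbabilityTheory.lintegral_betaPDF,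
      ← lintegral_const_mul' _ _ ENNReal.ofReal_ne_top]
    simp_rw [mul_assoc, ← ENNReal.ofReal_mul (inv_pos.2 hB).le, one_div]
    rfl
  rw [ENNReal.ofReal_inv_of_pos hB, mul_comm] at h
  rw [ENNReal.eq_inv_of_mul_eq_one_left h, inv_inv]

theorem hasSum_of_tsum_ofReal {f : ℕ → ℝ} {s : ℝ} (hf : ∀ n, 0 ≤ f n) (hs : 0 ≤ s)
    (h : ∑' n, ENNReal.ofReal (f n) = ENNReal.ofReal s) : HasSum f s := by
  have := ENNReal.hasSum_toReal (h ▸ ENNReal.ofReal_ne_top)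
  rw [← ENNReal.tsum_toReal_eq fun _ => ENNReal.ofReal_ne_top, h] at this
  simpa only [ENNReal.toReal_ofReal, hf, hs] using this

theorem hasSum_pochCoeff_mul_rpow_mul_one_sub_rpow (α β γ : ℝ) {x : ℝ} (hx : x ∈ Ioo (0 : ℝ) 1) :
    HasSum (fun n : ℕ => pochCoeff α n * (x ^ (β + n - 1) * (1 - x) ^ (γ - β - 1)))
      (x ^ (β - 1) * (1 - x) ^ (γ - α - β - 1)) := by
  have hx1 : 0 < 1 - x := sub_pos.2 hx.2
  have h := (hasSum_pochCoeff_mul_pow α (abs_lt.2 ⟨by linarith [hx.1], hx.2⟩)).mul_left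
    (x ^ (β - 1) * (1 - x) ^ (γ - β - 1))
  rw [mul_assoc, ← Real.rpow_add hx1, show γ - β - 1 + -α = γ - α - β - 1 by ring] at h
  refine h.congr_fun fun n => ?_
  rw [show β + n - 1 = β - 1 + n by ring, Real.rpow_add hx.1, Real.rpow_natCast]
  ring

theorem hasSum_pochCoeff_mul_betaFn {α β γ : ℝ} (hα : 0 < α) (hβ : 0 < β) (h : 0 < γ - α - β) :
    HasSum (fun n : ℕ => pochCoeff α n * betaFn (β + n) (γ - β)) (betaFn β (γ - α - β)) := by
  have hc := fun n => (pochCoeff_pos hα n).le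
  have hB := fun n : ℕ => (betaFn_pos (show 0 < β + n by positivity)
    (show 0 < γ - β by linarith)).le
  refine hasSum_of_tsum_ofReal (fun n => mul_nonneg (hc n) (hB n)) (betaFn_pos hβ h).le ?_
  calc ∑' n : ℕ, ENNReal.ofReal (pochCoeff α n * betaFn (β + n) (γ - β))
      = ∑' n : ℕ, ∫⁻ x in Ioo (0 : ℝ) 1,
          ENNReal.ofReal (pochCoeff α n * (x ^ (β + n - 1) * (1 - x) ^ (γ - β - 1))) := by
        refine tsum_congr fun n => ?_
        simp_rw [ENNReal.ofReal_mul (hc n)]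
        rw [lintegral_const_mul' _ _ ENNReal.ofReal_ne_top,
          lintegral_rpow_mul_one_sub_rpow (by positivity) (by linarith)]
    _ = ∫⁻ x in Ioo (0 : ℝ) 1, ∑' n : ℕ,
          ENNReal.ofReal (pochCoeff α n * (x ^ (β + n - 1) * (1 - x) ^ (γ - β - 1))) :=
        (lintegral_tsum fun n => by fun_prop).symm
    _ = ∫⁻ x in Ioo (0 : ℝ) 1, ENNReal.ofReal (x ^ (β - 1) * (1 - x) ^ (γ - α - β - 1)) := by
        refine setLIntegral_congr_fun measurableSet_Ioo fun x hx => ?_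
        have hx1 : 0 < 1 - x := sub_pos.2 hx.2
        have hx0 := hx.1
        have hs := hasSum_pochCoeff_mul_rpow_mul_one_sub_rpow α β γ hx
        rw [← ENNReal.ofReal_tsum_of_nonneg (fun n => mul_nonneg (hc n) (by positivity))
          hs.summable, hs.tsum_eq]
    _ = ENNReal.ofReal (betaFn β (γ - α - β)) := lintegral_rpow_mul_one_sub_rpow hβ h

theorem hasSum_gauss {α β γ : ℝ} (hα : 0 < α) (hβ : 0 < β) (h : 0 < γ - α - β) :
    HasSum (fun n : ℕ => pochCoeff α n * (Real.Gamma (β + n) / Real.Gamma (γ + n)))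
      (Real.Gamma β * Real.Gamma (γ - α - β) / (Real.Gamma (γ - α) * Real.Gamma (γ - β))) := by
  have hG : Real.Gamma (γ - β) ≠ 0 := (Real.Gamma_pos_of_pos (by linarith)).ne'
  have hsum := (hasSum_pochCoeff_mul_betaFn hα hβ h).div_const (Real.Gamma (γ - β))
  simp only [betaFn, show β + (γ - α - β) = γ - α by ring, div_div] at hsum
  refine hsum.congr_fun fun n => ?_
  rw [show β + n + (γ - β) = γ + n by ring]
  field_simp

theorem mul_betaFn_eq_add_mul_betaFn {y : ℝ} (hy : y ≠ 0) (b : ℝ) :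
    y * betaFn y b = (y + b) * betaFn (y + 1) b := by
  rw [betaFn, betaFn, Real.Gamma_add_one hy]
  by_cases hyb : y + b = 0
  · simp [hyb]
  · rw [show y + 1 + b = y + b + 1 by ring, Real.Gamma_add_one hyb]
    field_simp

theorem hasSum_pochCoeff_div_telescope {α y : ℝ} (hα : 0 < α) (hα1 : α < 1)
    (hy : ∀ m : ℕ, y ≠ -m) :
    HasSum (fun n : ℕ => y * (pochCoeff α n / (y + n)) -
      (y + (1 - α)) * (pochCoeff α n / (y + 1 + n))) 0 := by
  have hne : ∀ n : ℕ, y + n ≠ 0 := fun n h => hy n (by linarith)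
  set f : ℕ → ℝ := fun n => pochCoeff α n * (n / (n + y)) with hf
  have hstep : ∀ n : ℕ, y * (pochCoeff α n / (y + n)) -
      (y + (1 - α)) * (pochCoeff α n / (y + 1 + n)) = f (n + 1) - f n := fun n => by
    have h0 := hne n
    have h1 : y + 1 + n ≠ 0 := by
      have := hne (n + 1)
      push_cast at this
      rwa [add_assoc, add_comm 1]
    have hsucc : f (n + 1) = pochCoeff α n * (α + n) / (y + 1 + n) := by
      rw [← pochCoeff_succ, hf]
      push_cast
      rw [show (n : ℝ) + 1 + y = y + 1 + n by ring]
      ring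
    rw [hsucc]
    simp only [hf]
    rw [add_comm (n : ℝ) y]
    field_simp
    ring
  have hlim : Tendsto f atTop (𝓝 0) := by
    simpa using (tendsto_pochCoeff_zero hα hα1).mul (tendsto_natCast_div_add_atTop y)
  have hs := ((summable_pochCoeff_div_add hα hα1 y).mul_left y).sub
    ((summable_pochCoeff_div_add hα hα1 (y + 1)).mul_left (y + (1 - α)))
  rw [hs.hasSum_iff_tendsto_nat]
  simp_rw [hstep, Finset.sum_range_sub]
  simpa [hf] using hlim

theorem hasSum_pochCoeff_div_add {α y : ℝ} (hα : 0 < α) (hα1 : α < 1) (hy : ∀ m : ℕ, y ≠ -m) :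
    HasSum (fun n : ℕ => pochCoeff α n / (y + n)) (betaFn y (1 - α)) := by
  obtain ⟨N, hN⟩ := exists_nat_gt (-y)
  replace hN : 0 < y + N := by linarith
  induction N generalizing y with
  | zero =>
    have hy0 : 0 < y := by simpa using hN
    have h := hasSum_gauss (γ := y + 1) hα hy0 (by linarith)
    rw [add_sub_cancel_left, Real.Gamma_one, mul_one, show y + 1 - α - y = 1 - α by ring,
      add_sub_assoc] at h
    refine h.congr_fun fun n => ?_
    have hp : 0 < y + n := by positivity
    have := Real.Gamma_pos_of_pos hp
    rw [add_right_comm, Real.Gamma_add_one hp.ne']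
    field_simp
  | succ N ih =>
    have hy0 : y ≠ 0 := by simpa using hy 0
    have hshift : HasSum (fun n : ℕ => pochCoeff α n / (y + 1 + n)) (betaFn (y + 1) (1 - α)) :=
      ih (fun m h => hy (m + 1) (by push_cast; linarith)) (by push_cast at hN; linarith)
    have hsum := (hasSum_pochCoeff_div_telescope hα hα1 hy).add
      (hshift.mul_left (y + (1 - α)))
    simp only [sub_add_cancel, zero_add, ← mul_betaFn_eq_add_mul_betaFn hy0] at hsum
    exact (hasSum_mul_left_iff hy0).1 hsum

theorem ne_neg_natCast {y : ℝ} (hy : 0 < y) (m : ℕ) : y ≠ -m :=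
  ((neg_nonpos.2 m.cast_nonneg).trans_lt hy).ne'

theorem betaFn_natCast_add {α : ℝ} (hα : 0 < α) (n : ℕ) :
    betaFn (n + α) (1 - α) = betaFn α (1 - α) * pochCoeff α n := by
  rw [betaFn, betaFn, add_comm (n : ℝ), Gamma_add_natCast hα, add_sub_cancel,
    show α + n + (1 - α) = n + 1 by ring, Real.Gamma_nat_eq_factorial, Real.Gamma_one, pochCoeff]
  ring

theorem betaFn_half_half : betaFn (1 / 2) (1 / 2) = Real.pi := by
  rw [betaFn, add_halves, Real.Gamma_one, div_one, Real.Gamma_one_half_eq,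
    Real.mul_self_sqrt Real.pi_pos.le]

theorem hasSum_mul_of_nonneg {v s : ℕ → ℝ} {w : ℕ → ℕ → ℝ} {S : ℝ} (hw : ∀ n m, 0 ≤ w n m)
    (hs : ∀ n, HasSum (w n) (s n)) (hS : HasSum (fun n => v n * s n) S) :
    HasSum (fun p : ℕ × ℕ => v p.1 * w p.1 p.2) S := by
  have hrow (n : ℕ) : HasSum (fun m => v n * w n m) (v n * s n) := (hs n).mul_left (v n)
  have hrow_norm (n : ℕ) : HasSum (fun m => ‖v n * w n m‖) ‖v n * s n‖ := by
    simpa only [norm_mul, Real.norm_of_nonneg (hw n _),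
      Real.norm_of_nonneg ((hs n).nonneg (hw n))] using (hs n).mul_left ‖v n‖
  have hsum : Summable fun p : ℕ × ℕ => v p.1 * w p.1 p.2 := by
    refine .of_norm ((summable_prod_of_nonneg fun _ => norm_nonneg _).2
      ⟨fun n => (hrow_norm n).summable, ?_⟩)
    simpa only [fun n => (hrow_norm n).tsum_eq] using hS.summable.norm
  rw [hS.unique (hsum.hasSum.prod_fiberwise hrow)]
  exact hsum.hasSum

theorem hasSum_pochCoeff_div_natCast_add {α : ℝ} (hα : 0 < α) (hα1 : α < 1) (n : ℕ) :
    HasSum (fun m : ℕ => pochCoeff α m / (n + α + m)) (betaFn α (1 - α) * pochCoeff α n) := by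
  rw [← betaFn_natCast_add hα]
  exact hasSum_pochCoeff_div_add hα hα1 (ne_neg_natCast (by positivity))

theorem summable_pochCoeff_sq_div_add {α : ℝ} (hα : 0 < α) (hα1 : α < 1) (y : ℝ) :
    Summable fun n : ℕ => pochCoeff α n ^ 2 / (y + n) := by
  refine .of_norm_bounded (summable_pochCoeff_div_add hα hα1 y).norm fun n => ?_
  have hc := (pochCoeff_pos hα n).le
  rw [norm_div, norm_div, Real.norm_of_nonneg (sq_nonneg _), Real.norm_of_nonneg hc]
  gcongr
  exact pow_le_of_le_one hc (pochCoeff_le_one hα hα1.le n) two_ne_zero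

theorem hasSum_pochCoeff_kernel {α : ℝ} (hα : 0 < α) (hα1 : α < 1) (y : ℝ) :
    HasSum (fun p : ℕ × ℕ => pochCoeff α p.1 / (y + p.1) * (pochCoeff α p.2 / (p.1 + α + p.2)))
      (betaFn α (1 - α) * ∑' n : ℕ, pochCoeff α n ^ 2 / (y + n)) := by
  refine hasSum_mul_of_nonneg (v := fun n : ℕ => pochCoeff α n / (y + n))
    (w := fun n m : ℕ => pochCoeff α m / (n + α + m))
    (fun n m => div_nonneg (pochCoeff_pos hα m).le (by positivity))
    (hasSum_pochCoeff_div_natCast_add hα hα1) ?_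
  refine ((summable_pochCoeff_sq_div_add hα hα1 y).hasSum.mul_left _).congr_fun fun n => ?_
  ring

/-- Both kernels `1 / ((n + m + α) (a + n))` and `1 / ((n + m + α) (α - a + m))` are summed by rows
or columns, and by partial fractions they add up to a product of two single series. -/
theorem hasSum_pochCoeff_sq_mul {α a : ℝ} (hα : 0 < α) (hα1 : α < 1) (ha : ∀ m : ℕ, a ≠ -m)
    (ha' : ∀ m : ℕ, α - a ≠ -m) :
    HasSum (fun k : ℕ => pochCoeff α k ^ 2 * (1 / (a + k) + 1 / (α - a + k)))
      (betaFn a (1 - α) * betaFn (α - a) (1 - α) / betaFn α (1 - α)) := by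
  have hB : 0 < betaFn α (1 - α) := betaFn_pos hα (by linarith)
  have hsum := (hasSum_pochCoeff_kernel hα hα1 a).add
    ((Equiv.prodComm ℕ ℕ).hasSum_iff.2 (hasSum_pochCoeff_kernel hα hα1 (α - a)))
  have hpartial (p : ℕ × ℕ) :
      pochCoeff α p.1 / (a + p.1) * (pochCoeff α p.2 / (α - a + p.2)) =
        pochCoeff α p.1 / (a + p.1) * (pochCoeff α p.2 / (p.1 + α + p.2)) +
          pochCoeff α p.2 / (α - a + p.2) * (pochCoeff α p.1 / (p.2 + α + p.1)) := by
    have h1 : a + p.1 ≠ 0 := fun h => ha p.1 (by linarith)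
    have h2 : α - a + p.2 ≠ 0 := fun h => ha' p.2 (by linarith)
    have h3 : (p.1 : ℝ) + α + p.2 ≠ 0 := by positivity
    rw [show (p.2 : ℝ) + α + p.1 = p.1 + α + p.2 by ring]
    field_simp
    ring
  have hprod := hsum.congr_fun hpartial
  rw [((hasSum_pochCoeff_div_add hα hα1 ha).mul (hasSum_pochCoeff_div_add hα hα1 ha')
    hprod.summable).unique hprod, ← mul_add,
    mul_div_cancel_left₀ _ hB.ne']
  refine ((summable_pochCoeff_sq_div_add hα hα1 a).hasSum.add
    (summable_pochCoeff_sq_div_add hα hα1 (α - a)).hasSum).congr_fun fun k => ?_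
  ring

theorem Gamma_one_sub_div_Gamma_one_sub {x y : ℝ} (hx : 0 < x) (hy : 0 < y) :
    Real.Gamma (1 - x) / Real.Gamma (1 - y) =
      Real.sin (Real.pi * y) * Real.Gamma y / (Real.sin (Real.pi * x) * Real.Gamma x) := by
  have hx' := (Real.Gamma_pos_of_pos hx).ne'
  have hy' := (Real.Gamma_pos_of_pos hy).ne'
  rw [eq_div_of_mul_eq hx' ((mul_comm _ _).trans (Real.Gamma_mul_Gamma_one_sub x)),
    eq_div_of_mul_eq hy' ((mul_comm _ _).trans (Real.Gamma_mul_Gamma_one_sub y))]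
  field_simp

theorem betaFn_mul_betaFn_half_sub {a : ℝ} (ha : 0 < a) :
    betaFn a (1 / 2) * betaFn (1 / 2 - a) (1 / 2) / Real.pi =
      Real.tan (Real.pi * a) * (Real.Gamma a / Real.Gamma (a + 1 / 2)) ^ 2 := by
  have hrefl : Real.Gamma (1 / 2 - a) / Real.Gamma (1 - a) =
      Real.tan (Real.pi * a) * (Real.Gamma a / Real.Gamma (a + 1 / 2)) := by
    rw [show 1 / 2 - a = 1 - (a + 1 / 2) by ring,
      Gamma_one_sub_div_Gamma_one_sub (by positivity) ha,
      show Real.pi * (a + 1 / 2) = Real.pi * a + Real.pi / 2 by ring, Real.sin_add_pi_div_two,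
      Real.tan_eq_sin_div_cos, div_mul_div_comm]
  calc betaFn a (1 / 2) * betaFn (1 / 2 - a) (1 / 2) / Real.pi
      = Real.Gamma (1 / 2) * Real.Gamma (1 / 2) / Real.pi *
          (Real.Gamma a / Real.Gamma (a + 1 / 2) *
            (Real.Gamma (1 / 2 - a) / Real.Gamma (1 - a))) := by
        rw [betaFn, betaFn, show 1 / 2 - a + 1 / 2 = 1 - a by ring]
        ring
    _ = _ := by
        rw [hrefl, Real.Gamma_one_half_eq, Real.mul_self_sqrt Real.pi_pos.le,
          div_self Real.pi_ne_zero]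
        ring

theorem half_sub_ne_intCast {a : ℝ} (ha : Real.cos (Real.pi * a) ≠ 0) (j : ℤ) :
    1 / 2 - a ≠ j := by
  rintro h
  rw [show Real.pi * a = Real.pi / 2 - j * Real.pi by rw [← h]; ring, Real.cos_pi_div_two_sub,
    Real.sin_int_mul_pi] at ha
  exact ha rfl

theorem hasSum_pochCoeff_half_sq_mul {a : ℝ} (ha : 0 < a) (hcos : Real.cos (Real.pi * a) ≠ 0) :
    HasSum (fun k : ℕ => pochCoeff (1 / 2) k ^ 2 * (1 / (a + k) + 1 / (1 / 2 - a + k)))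
      (Real.tan (Real.pi * a) * (Real.Gamma a / Real.Gamma (a + 1 / 2)) ^ 2) := by
  have h := hasSum_pochCoeff_sq_mul (α := 1 / 2) (by norm_num) (by norm_num) (ne_neg_natCast ha)
    fun m => by simpa using half_sub_ne_intCast hcos (-m)
  rwa [sub_self_div_two, betaFn_half_half, betaFn_mul_betaFn_half_sub ha] at h

/-! ### Summability of the double series -/

/-- Both integrable powers of `p` and `q` appear because neither factor of `1 / (p q)` alone is
summable; the sum `p + q` absorbs the exponent that is left. -/
theorem one_div_mul_le_rpow {p q N ε : ℝ} (hp : 0 < p) (hq : 0 < q) (hN : 0 < N)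
    (h : N ≤ p + q) (hε0 : 0 ≤ ε) (hε1 : ε ≤ 1) :
    1 / (p * q) ≤ N ^ (ε - 1) * (p ^ (-1 - ε) + q ^ (-1 - ε)) := by
  have hpq : 0 < p + q := by positivity
  have hbound {r : ℝ} (hr : 0 < r) (hr' : r ≤ p + q) :
      r⁻¹ * (p + q)⁻¹ ≤ N ^ (ε - 1) * r ^ (-1 - ε) :=
    calc r⁻¹ * (p + q)⁻¹ = r⁻¹ * ((p + q) ^ (ε - 1) * (p + q) ^ (-ε)) := by
          rw [← Real.rpow_add hpq, ← Real.rpow_neg_one (p + q)]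
          ring_nf
      _ ≤ r⁻¹ * (N ^ (ε - 1) * r ^ (-ε)) := by
          gcongr r⁻¹ * (?_ * ?_)
          · exact Real.rpow_le_rpow_of_nonpos hN h (by linarith)
          · exact Real.rpow_le_rpow_of_nonpos hr hr' (by linarith)
      _ = N ^ (ε - 1) * r ^ (-1 - ε) := by
          rw [show -1 - ε = -1 + -ε by ring, Real.rpow_add hr, Real.rpow_neg_one]
          ring
  calc 1 / (p * q) = p⁻¹ * (p + q)⁻¹ + q⁻¹ * (p + q)⁻¹ := by field_simp; ring
    _ ≤ N ^ (ε - 1) * p ^ (-1 - ε) + N ^ (ε - 1) * q ^ (-1 - ε) :=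
        add_le_add (hbound hp (by linarith)) (hbound hq (by linarith))
    _ = N ^ (ε - 1) * (p ^ (-1 - ε) + q ^ (-1 - ε)) := by ring

theorem summable_one_add_abs_intCast_rpow {p : ℝ} (hp : p < -1) :
    Summable fun j : ℤ => (1 + |(j : ℝ)|) ^ p := by
  have h := summable_natCast_add_one_rpow hp
  refine .of_nat_of_neg ?_ ?_ <;>
  · refine h.congr fun n => ?_
    simp [add_comm]

theorem summable_rpow_mul_rpow_add_rpow {p : ℝ} (hp : p < -1) :
    Summable fun x : ℕ × ℕ => ((x.1 : ℝ) + 1) ^ p *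
      (((x.2 : ℝ) + 1) ^ p + (1 + |(x.1 : ℝ) - x.2|) ^ p) := by
  have hN := summable_natCast_add_one_rpow hp
  have hZ := summable_one_add_abs_intCast_rpow hp
  have hinj : Function.Injective fun x : ℕ × ℕ => ((x.1, (x.1 : ℤ) - x.2) : ℕ × ℤ) := by
    rintro ⟨n, k⟩ ⟨n', k'⟩ h
    simp only [Prod.mk.injEq] at h ⊢
    omega
  have h1 := hN.mul_of_nonneg hN (fun n => by positivity) (fun n => by positivity)
  have h2 := (hN.mul_of_nonneg hZ (fun n => by positivity)
    (fun n => by positivity)).comp_injective hinj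
  refine (h1.add h2).congr fun x => ?_
  simp only [Function.comp_apply, Int.cast_sub, Int.cast_natCast]
  ring

theorem pochCoeff_half_sq_le (k : ℕ) : pochCoeff (1 / 2) k ^ 2 ≤ ((k : ℝ) + 1)⁻¹ := by
  have hk : (0 : ℝ) ≤ k + 1 := by positivity
  have hc := (pochCoeff_pos (α := 1 / 2) (by norm_num) k).le
  calc pochCoeff (1 / 2) k ^ 2 ≤ (((k : ℝ) + 1) ^ (1 / 2 - 1 : ℝ)) ^ 2 := by
        gcongr
        exact pochCoeff_le_rpow (by norm_num) (by norm_num) k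
    _ = ((k : ℝ) + 1)⁻¹ := by
        rw [← Real.rpow_natCast, ← Real.rpow_mul hk, ← Real.rpow_neg_one]
        norm_num

theorem summable_pochCoeff_mul_sq_div_of_le {α δ : ℝ} (hα : 0 < α) (hα1 : α < 1) (hδ : 0 < δ)
    {f : ℕ → ℕ → ℝ} (hf : ∀ n k : ℕ, δ * (1 + |(n : ℝ) - k|) ≤ |f n k|) :
    Summable fun x : ℕ × ℕ =>
      pochCoeff α x.1 * pochCoeff (1 / 2) x.2 ^ 2 / f x.1 x.2 := by
  set ε := (1 - α) / 2 with hε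
  have hmaj := (summable_rpow_mul_rpow_add_rpow (p := -1 - ε) (by linarith)).mul_left δ⁻¹
  refine .of_norm_bounded hmaj fun ⟨n, k⟩ => ?_
  have hn : (0 : ℝ) < n + 1 := by positivity
  have hc := (pochCoeff_pos hα n).le
  have hle := one_div_mul_le_rpow (p := k + 1) (q := 1 + |(n : ℝ) - k|) (N := n + 1) (ε := ε)
    (by positivity) (by positivity) hn (by linarith [le_abs_self ((n : ℝ) - k)]) (by linarith)
    (by linarith)
  calc ‖pochCoeff α n * pochCoeff (1 / 2) k ^ 2 / f n k‖
      = pochCoeff α n * pochCoeff (1 / 2) k ^ 2 / |f n k| := by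
        rw [norm_div, Real.norm_of_nonneg (by positivity), Real.norm_eq_abs]
    _ ≤ ((n : ℝ) + 1) ^ (α - 1) * ((k : ℝ) + 1)⁻¹ / (δ * (1 + |(n : ℝ) - k|)) := by
        gcongr
        · exact pochCoeff_le_rpow hα hα1.le n
        · exact pochCoeff_half_sq_le k
        · exact hf n k
    _ = δ⁻¹ * (((n : ℝ) + 1) ^ (α - 1) * (1 / ((k + 1) * (1 + |(n : ℝ) - k|)))) := by
        field_simp
    _ ≤ δ⁻¹ * (((n : ℝ) + 1) ^ (α - 1) * (((n : ℝ) + 1) ^ (ε - 1) *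
          (((k : ℝ) + 1) ^ (-1 - ε) + (1 + |(n : ℝ) - k|) ^ (-1 - ε)))) := by gcongr
    _ = _ := by
        rw [← mul_assoc (((n : ℝ) + 1) ^ (α - 1)), ← Real.rpow_add hn,
          show α - 1 + (ε - 1) = -1 - ε by rw [hε]; ring]

theorem summable_pochCoeff_mul_sq_div_add {α a : ℝ} (hα : 0 < α) (hα1 : α < 1) (ha : 0 < a) :
    Summable fun x : ℕ × ℕ =>
      pochCoeff α x.1 * pochCoeff (1 / 2) x.2 ^ 2 / (a + x.1 + x.2) := by
  refine summable_pochCoeff_mul_sq_div_of_le (f := fun n k => a + n + k) hα hα1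
    (lt_min ha one_pos) fun n k => ?_
  calc min a 1 * (1 + |(n : ℝ) - k|) ≤ min a 1 * (1 + (n + k)) := by
        gcongr
        exact abs_le.2 ⟨by linarith [n.cast_nonneg (α := ℝ)], by linarith [k.cast_nonneg (α := ℝ)]⟩
    _ = min a 1 + min a 1 * (n + k) := by ring
    _ ≤ a + 1 * (n + k) := by
        gcongr
        · exact min_le_left a 1
        · exact min_le_right a 1
    _ = a + n + k := by ring
    _ ≤ |a + n + k| := le_abs_self _

theorem exists_mul_one_add_abs_le_abs_sub {θ : ℝ} (hθ : ∀ j : ℤ, θ ≠ j) :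
    ∃ δ > 0, ∀ j : ℤ, δ * (1 + |(j : ℝ)|) ≤ |θ - j| := by
  set d := |θ - round θ|
  have hd : 0 < d := abs_pos.2 (sub_ne_zero.2 (hθ _))
  refine ⟨d / (1 + |θ| + d), by positivity, fun j => ?_⟩
  have hdj : d ≤ |θ - j| := round_le θ j
  have hj : |(j : ℝ)| ≤ |θ| + |θ - j| := by
    simpa using abs_sub θ (θ - j)
  rw [div_mul_eq_mul_div, div_le_iff₀ (by positivity)]
  calc d * (1 + |(j : ℝ)|) ≤ d * (1 + (|θ| + |θ - j|)) := by gcongr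
    _ = d * (1 + |θ|) + |θ - j| * d := by ring
    _ ≤ |θ - j| * (1 + |θ|) + |θ - j| * d := by gcongr
    _ = |θ - j| * (1 + |θ| + d) := by ring

theorem summable_pochCoeff_mul_sq_div_sub {α θ : ℝ} (hα : 0 < α) (hα1 : α < 1)
    (hθ : ∀ j : ℤ, θ ≠ j) :
    Summable fun x : ℕ × ℕ =>
      pochCoeff α x.1 * pochCoeff (1 / 2) x.2 ^ 2 / (θ - x.1 + x.2) := by
  obtain ⟨δ, hδ, hle⟩ := exists_mul_one_add_abs_le_abs_sub hθ
  refine summable_pochCoeff_mul_sq_div_of_le (f := fun n k => θ - n + k) hα hα1 hδ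
    fun n k => ?_
  simpa [sub_add] using hle (n - k)

/-! ### Relations between Beta series -/

/-- The series `∑ (1/2)_k² / k!² B(a + k, b)`, which is `B(a, b) ₃F₂(1/2, 1/2, a; 1, a + b; 1)`;
up to a factor it is the integral of `x ^ (a - 1) (1 - x) ^ (b - 1)` against the complete elliptic
integral `K(x)`. -/
noncomputable def betaSeries (a b : ℝ) : ℝ :=
  ∑' k : ℕ, pochCoeff (1 / 2) k ^ 2 * betaFn (a + k) b

/-- The series `∑ (α)_n / n! (Γ(a + n) / Γ(a + n + 1/2))²`, a multiple of a `₃F₂` at `1` that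
mediates between the values `betaSeries · (1 - α)` and `betaSeries · α`. -/
noncomputable def gammaRatioSeries (α a : ℝ) : ℝ :=
  ∑' n : ℕ, pochCoeff α n * (Real.Gamma (a + n) / Real.Gamma (a + n + 1 / 2)) ^ 2

theorem betaFn_one_sub_add {y b : ℝ} (hy : 0 < y) (hb : 0 < b) :
    betaFn (1 - (y + b)) b =
      Real.sin (Real.pi * y) / Real.sin (Real.pi * (y + b)) * betaFn y b := by
  rw [betaFn, mul_div_right_comm, show 1 - (y + b) + b = 1 - y by ring,
    Gamma_one_sub_div_Gamma_one_sub (by positivity) hy, betaFn]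
  ring

theorem neg_betaFn_sub_half_sub {a c b : ℝ} (hc : 0 < c) (hb : 0 < b) (h : a + c + b = 3 / 2)
    (k : ℕ) :
    -betaFn (a - 1 / 2 - k) b =
      Real.sin (Real.pi * c) / Real.cos (Real.pi * a) * betaFn (c + k) b := by
  have hsin : Real.sin (Real.pi * (c + k)) = (-1) ^ k * Real.sin (Real.pi * c) := by
    rw [mul_add, mul_comm Real.pi (k : ℝ), Real.sin_add_nat_mul_pi]
  have hcos : Real.sin (Real.pi * (c + k + b)) = -((-1) ^ k * Real.cos (Real.pi * a)) := by
    rw [show Real.pi * (c + k + b) = Real.pi / 2 - Real.pi * a + Real.pi + k * Real.pi by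
      rw [show c = 3 / 2 - a - b by linarith]; ring, Real.sin_add_nat_mul_pi, Real.sin_add_pi,
      Real.sin_pi_div_two_sub]
    ring
  rw [show a - 1 / 2 - k = 1 - (c + k + b) by linarith,
    betaFn_one_sub_add (by positivity) hb, hsin, hcos, div_neg, neg_mul, neg_neg,
    mul_div_mul_left _ _ (by positivity)]

theorem hasSum_column_add {α a : ℝ} (hα : 0 < α) (hα1 : α < 1) (ha : 0 < a) (k : ℕ) :
    HasSum (fun n : ℕ => pochCoeff α n * pochCoeff (1 / 2) k ^ 2 / (a + n + k))
      (pochCoeff (1 / 2) k ^ 2 * betaFn (a + k) (1 - α)) := by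
  refine ((hasSum_pochCoeff_div_add hα hα1 (ne_neg_natCast (by positivity))).mul_left
    (pochCoeff (1 / 2) k ^ 2)).congr_fun fun n => ?_
  rw [add_right_comm]
  ring

theorem hasSum_betaSeries {α a : ℝ} (hα : 0 < α) (hα1 : α < 1) (ha : 0 < a) :
    HasSum (fun k : ℕ => pochCoeff (1 / 2) k ^ 2 * betaFn (a + k) (1 - α))
      (betaSeries a (1 - α)) :=
  (((Equiv.prodComm ℕ ℕ).summable_iff.2
    (summable_pochCoeff_mul_sq_div_add hα hα1 ha)).hasSum.prod_fiberwise
      (hasSum_column_add hα hα1 ha)).summable.hasSum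

theorem hasSum_row (α : ℝ) {a : ℝ} (ha : 0 < a) (hcos : Real.cos (Real.pi * a) ≠ 0) (n : ℕ) :
    HasSum (fun k : ℕ => pochCoeff α n * pochCoeff (1 / 2) k ^ 2 / (a + n + k) +
        pochCoeff α n * pochCoeff (1 / 2) k ^ 2 / (1 / 2 - a - n + k))
      (Real.tan (Real.pi * a) *
        (pochCoeff α n * (Real.Gamma (a + n) / Real.Gamma (a + n + 1 / 2)) ^ 2)) := by
  have hperiod : Real.pi * (a + n) = Real.pi * a + n * Real.pi := by ring
  have h := (hasSum_pochCoeff_half_sq_mul (a := a + n) (by positivity) (by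
    rw [hperiod, Real.cos_add_nat_mul_pi]
    positivity)).mul_left (pochCoeff α n)
  rw [hperiod, Real.tan_add_nat_mul_pi, mul_left_comm] at h
  refine h.congr_fun fun k => ?_
  rw [← sub_sub]
  ring

theorem hasSum_column_sub {α a c : ℝ} (hα : 0 < α) (hα1 : α < 1)
    (hcos : Real.cos (Real.pi * a) ≠ 0) (hc : 0 < c) (h : a + c = α + 1 / 2) (k : ℕ) :
    HasSum (fun n : ℕ => pochCoeff α n * pochCoeff (1 / 2) k ^ 2 / (1 / 2 - a - n + k))
      (Real.sin (Real.pi * c) / Real.cos (Real.pi * a) *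
        (pochCoeff (1 / 2) k ^ 2 * betaFn (c + k) (1 - α))) := by
  have hpole (m : ℕ) : a - 1 / 2 - k ≠ -m := fun hm =>
    half_sub_ne_intCast hcos (m - k) (by push_cast; linarith)
  have hsum := (hasSum_pochCoeff_div_add hα hα1 hpole).neg.mul_left (pochCoeff (1 / 2) k ^ 2)
  rw [neg_betaFn_sub_half_sub hc (by linarith) (by linarith), mul_left_comm] at hsum
  refine hsum.congr_fun fun n => ?_
  rw [show 1 / 2 - a - n + k = -(a - 1 / 2 - k + n) by ring, div_neg]
  ring

/-- Both sides evaluate one double series, by rows and by columns. -/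
theorem sin_mul_gammaRatioSeries {α a c : ℝ} (hα : 0 < α) (hα1 : α < 1) (ha : 0 < a)
    (hcos : Real.cos (Real.pi * a) ≠ 0) (hc : 0 < c) (h : a + c = α + 1 / 2) :
    Real.sin (Real.pi * a) * gammaRatioSeries α a =
      Real.cos (Real.pi * a) * betaSeries a (1 - α) +
        Real.sin (Real.pi * c) * betaSeries c (1 - α) := by
  have hsum := ((summable_pochCoeff_mul_sq_div_add hα hα1 ha).add
    (summable_pochCoeff_mul_sq_div_sub hα hα1 (half_sub_ne_intCast hcos))).hasSum
  have hrows := hsum.prod_fiberwise (hasSum_row α ha hcos)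
  have hcolumns := ((Equiv.prodComm ℕ ℕ).hasSum_iff.2 hsum).prod_fiberwise fun k =>
    (hasSum_column_add hα hα1 ha k).add (hasSum_column_sub hα hα1 hcos hc h k)
  have hbeta := (hasSum_betaSeries hα hα1 ha).add
    ((hasSum_betaSeries hα hα1 hc).mul_left (Real.sin (Real.pi * c) / Real.cos (Real.pi * a)))
  have htan : Real.tan (Real.pi * a) * gammaRatioSeries α a = betaSeries a (1 - α) +
      Real.sin (Real.pi * c) / Real.cos (Real.pi * a) * betaSeries c (1 - α) := by
    rw [gammaRatioSeries, ← tsum_mul_left, hrows.tsum_eq, hcolumns.unique hbeta]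
  rw [Real.tan_eq_sin_div_cos] at htan
  field_simp at htan
  linear_combination htan

/-- The summand of the double series that Gauss's theorem sums over `m` and, by symmetry, over `n`
in the proof of Thomae's transformation. -/
noncomputable def thomaeKernel (a e : ℝ) (n m : ℕ) : ℝ :=
  pochCoeff a n * Real.Gamma (a + n) * (pochCoeff e m * Real.Gamma (e + m)) /
    Real.Gamma (a + e + 1 / 2 + n + m)

theorem thomaeKernel_comm (a e : ℝ) (n m : ℕ) : thomaeKernel a e n m = thomaeKernel e a m n := by
  rw [thomaeKernel, thomaeKernel, show a + e + 1 / 2 + n + m = e + a + 1 / 2 + m + n by ring]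
  ring

theorem thomaeKernel_pos {a e : ℝ} (ha : 0 < a) (he : 0 < e) (n m : ℕ) :
    0 < thomaeKernel a e n m := by
  have hG {x : ℝ} (hx : 0 < x) : 0 < Real.Gamma x := Real.Gamma_pos_of_pos hx
  have := pochCoeff_pos ha n
  have := pochCoeff_pos he m
  have := hG (show 0 < a + n by positivity)
  have := hG (show 0 < e + m by positivity)
  have := hG (show 0 < a + e + 1 / 2 + n + m by positivity)
  rw [thomaeKernel]
  positivity

theorem hasSum_thomaeKernel {a e : ℝ} (ha : 0 < a) (he : 0 < e) (h : 0 < 1 / 2 + a - e) (n : ℕ) :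
    HasSum (thomaeKernel a e n)
      (Real.Gamma (1 / 2 + a - e) * Real.Gamma e / Real.Gamma a *
        (pochCoeff (1 / 2 + a - e) n * (Real.Gamma (a + n) / Real.Gamma (a + n + 1 / 2)) ^ 2)) := by
  have hsum := (hasSum_gauss (γ := a + e + 1 / 2 + n) he he
    (by linarith [n.cast_nonneg (α := ℝ)])).mul_left
    (pochCoeff a n * Real.Gamma (a + n))
  rw [show a + e + 1 / 2 + n - e - e = 1 / 2 + a - e + n by ring,
    show a + e + 1 / 2 + n - e = a + n + 1 / 2 by ring, Gamma_add_natCast h] at hsum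
  have := Real.Gamma_pos_of_pos ha
  have hval : Real.Gamma (1 / 2 + a - e) * Real.Gamma e / Real.Gamma a *
        (pochCoeff (1 / 2 + a - e) n * (Real.Gamma (a + n) / Real.Gamma (a + n + 1 / 2)) ^ 2) =
      pochCoeff a n * Real.Gamma (a + n) *
        (Real.Gamma e * (poch (1 / 2 + a - e) n * Real.Gamma (1 / 2 + a - e)) /
          (Real.Gamma (a + n + 1 / 2) * Real.Gamma (a + n + 1 / 2))) := by
    rw [Gamma_add_natCast ha n, pochCoeff, pochCoeff]
    field_simp
  rw [hval]
  refine hsum.congr_fun fun m => ?_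
  rw [thomaeKernel]
  ring

theorem tsum_eq_tsum_of_hasSum_comm {f : ℕ → ℕ → ℝ} {g h : ℕ → ℝ} (hf : ∀ n m, 0 ≤ f n m)
    (hg : ∀ n, HasSum (f n) (g n)) (hh : ∀ m, HasSum (fun n => f n m) (h m)) :
    ∑' n, g n = ∑' m, h m := by
  have hg0 : ∀ n, 0 ≤ g n := fun n => (hg n).nonneg (hf n)
  have hh0 : ∀ m, 0 ≤ h m := fun m => (hh m).nonneg fun n => hf n m
  have hofReal : ∑' n, ENNReal.ofReal (g n) = ∑' m, ENNReal.ofReal (h m) := by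
    simp_rw [← fun n => (hg n).tsum_eq, ← fun m => (hh m).tsum_eq,
      fun n => ENNReal.ofReal_tsum_of_nonneg (hf n) (hg n).summable,
      fun m => ENNReal.ofReal_tsum_of_nonneg (fun n => hf n m) (hh m).summable]
    exact ENNReal.tsum_comm
  have htoReal := congrArg ENNReal.toReal hofReal
  rw [ENNReal.tsum_toReal_eq fun _ => ENNReal.ofReal_ne_top,
    ENNReal.tsum_toReal_eq fun _ => ENNReal.ofReal_ne_top] at htoReal
  simpa only [ENNReal.toReal_ofReal, hg0, hh0] using htoReal

theorem gammaRatioSeries_thomae {a e : ℝ} (ha : 0 < a) (he : 0 < e) (h : 0 < 1 / 2 + a - e)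
    (h' : 0 < 1 / 2 + e - a) :
    Real.Gamma (1 / 2 + a - e) * Real.Gamma e ^ 2 * gammaRatioSeries (1 / 2 + a - e) a =
      Real.Gamma (1 / 2 + e - a) * Real.Gamma a ^ 2 * gammaRatioSeries (1 / 2 + e - a) e := by
  have hcomm := tsum_eq_tsum_of_hasSum_comm (fun n m => (thomaeKernel_pos ha he n m).le)
    (hasSum_thomaeKernel ha he h) fun m =>
      (hasSum_thomaeKernel he ha h' m).congr_fun fun n => thomaeKernel_comm a e n m
  rw [tsum_mul_left, tsum_mul_left, ← gammaRatioSeries, ← gammaRatioSeries] at hcomm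
  have hGa := Real.Gamma_pos_of_pos ha
  have hGe := Real.Gamma_pos_of_pos he
  rw [div_mul_eq_mul_div, div_mul_eq_mul_div, div_eq_div_iff hGa.ne' hGe.ne'] at hcomm
  linear_combination hcomm

theorem betaSeries_four_term {α a c : ℝ} (hα : 0 < α) (hα1 : α < 1) (ha : 0 < a) (ha1 : a < 1)
    (hc : 0 < c) (hc1 : c < 1) (h : a + c = α + 1 / 2) (hcosa : Real.cos (Real.pi * a) ≠ 0)
    (hcosc : Real.cos (Real.pi * c) ≠ 0) :
    Real.Gamma α * Real.pi ^ 2 * (Real.cos (Real.pi * a) * betaSeries a (1 - α) +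
        Real.sin (Real.pi * c) * betaSeries c (1 - α)) =
      Real.Gamma (1 - α) * (Real.sin (Real.pi * a) * Real.Gamma a ^ 2) *
        (Real.sin (Real.pi * c) * Real.Gamma c ^ 2) *
        (Real.sin (Real.pi * a) * betaSeries (1 - a) α -
          Real.cos (Real.pi * c) * betaSeries (1 - c) α) := by
  have hsin : 0 < Real.sin (Real.pi * c) :=
    Real.sin_pos_of_pos_of_lt_pi (by positivity) (by nlinarith [Real.pi_pos])
  have hreflect : Real.pi * (1 - c) = Real.pi - Real.pi * c := by ring
  have hleft := sin_mul_gammaRatioSeries hα hα1 ha hcosa hc h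
  have hright := sin_mul_gammaRatioSeries (α := 1 - α) (a := 1 - c) (c := 1 - a) (by linarith)
    (by linarith) (by linarith) (by rwa [hreflect, Real.cos_pi_sub, neg_ne_zero]) (by linarith)
    (by linarith)
  rw [hreflect, Real.sin_pi_sub, Real.cos_pi_sub, show Real.pi * (1 - a) = Real.pi - Real.pi * a
    by ring, Real.sin_pi_sub, sub_sub_cancel] at hright
  have hthomae := gammaRatioSeries_thomae (a := a) (e := 1 - c) ha (by linarith) (by linarith)
    (by linarith)
  rw [show 1 / 2 + a - (1 - c) = α by linarith,
    show 1 / 2 + (1 - c) - a = 1 - α by linarith] at hthomae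
  have hGamma := Real.Gamma_mul_Gamma_one_sub c
  rw [eq_div_iff hsin.ne'] at hGamma
  have hpi_sq := congrArg (· ^ 2) hGamma
  rw [← hleft]
  linear_combination
    Real.sin (Real.pi * a) * (Real.Gamma c * Real.sin (Real.pi * c)) ^ 2 * hthomae +
      Real.Gamma (1 - α) * Real.sin (Real.pi * a) * Real.Gamma a ^ 2 * Real.sin (Real.pi * c) *
        Real.Gamma c ^ 2 * hright -
      Real.Gamma α * Real.sin (Real.pi * a) * gammaRatioSeries α a * hpi_sq

theorem Gamma_mul_sin_mul_Gamma_sq_mul_cos_mul_Gamma_sq {a : ℝ} (ha : 0 < a) (ha' : a < 1 / 2) :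
    Real.Gamma (1 - 2 * a) * (Real.sin (Real.pi * a) * Real.Gamma a ^ 2) *
        (Real.cos (Real.pi * a) * Real.Gamma (a + 1 / 2) ^ 2) =
      2 ^ (1 - 4 * a) * Real.pi ^ 2 * Real.Gamma (2 * a) := by
  have hsin : 0 < Real.sin (Real.pi * (2 * a)) :=
    Real.sin_pos_of_pos_of_lt_pi (by positivity) (by nlinarith [Real.pi_pos])
  have hdouble : Real.sin (Real.pi * (2 * a)) =
      2 * Real.sin (Real.pi * a) * Real.cos (Real.pi * a) := by
    rw [← Real.sin_two_mul]
    ring_nf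
  have hGamma := Real.Gamma_mul_Gamma_one_sub (2 * a)
  rw [eq_div_iff hsin.ne', hdouble] at hGamma
  have hpow : ((2 : ℝ) ^ (1 - 2 * a)) ^ 2 = 2 * 2 ^ (1 - 4 * a) := by
    rw [← Real.rpow_mul_natCast two_pos.le, ← Real.rpow_one_add' two_pos.le (by linarith)]
    ring_nf
  calc Real.Gamma (1 - 2 * a) * (Real.sin (Real.pi * a) * Real.Gamma a ^ 2) *
        (Real.cos (Real.pi * a) * Real.Gamma (a + 1 / 2) ^ 2)
      = Real.Gamma (1 - 2 * a) * Real.sin (Real.pi * a) * Real.cos (Real.pi * a) *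
          (Real.Gamma a * Real.Gamma (a + 1 / 2)) ^ 2 := by ring
    _ = 2 ^ (1 - 4 * a) * Real.pi * Real.Gamma (2 * a) * (Real.Gamma (2 * a) *
          Real.Gamma (1 - 2 * a) * (2 * Real.sin (Real.pi * a) * Real.cos (Real.pi * a))) := by
        rw [Real.Gamma_mul_Gamma_add_half, mul_pow, mul_pow, hpow, Real.sq_sqrt Real.pi_pos.le]
        ring
    _ = 2 ^ (1 - 4 * a) * Real.pi ^ 2 * Real.Gamma (2 * a) := by
        rw [hGamma]
        ring

theorem cos_mul_betaSeries_add {a : ℝ} (ha : 0 < a) (ha' : a < 1 / 2) :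
    Real.cos (Real.pi * a) * (betaSeries a (1 - 2 * a) + betaSeries (a + 1 / 2) (1 - 2 * a)) =
      2 ^ (1 - 4 * a) * (Real.sin (Real.pi * a) *
        (betaSeries (1 - a) (2 * a) + betaSeries (1 / 2 - a) (2 * a))) := by
  have hsin : 0 < Real.sin (Real.pi * a) :=
    Real.sin_pos_of_pos_of_lt_pi (by positivity) (by nlinarith [Real.pi_pos])
  have hcos : 0 < Real.cos (Real.pi * a) :=
    Real.cos_pos_of_mem_Ioo ⟨by nlinarith [Real.pi_pos], by nlinarith [Real.pi_pos]⟩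
  have hshift : Real.pi * (a + 1 / 2) = Real.pi * a + Real.pi / 2 := by ring
  have h := betaSeries_four_term (α := 2 * a) (a := a) (c := a + 1 / 2) (by linarith)
    (by linarith) ha (by linarith) (by linarith) (by linarith) (by ring) hcos.ne'
    (by rw [hshift, Real.cos_add_pi_div_two]; exact neg_ne_zero.2 hsin.ne')
  rw [hshift, Real.sin_add_pi_div_two, Real.cos_add_pi_div_two,
    Gamma_mul_sin_mul_Gamma_sq_mul_cos_mul_Gamma_sq ha ha',
    show 1 - (a + 1 / 2) = 1 / 2 - a by ring] at h
  have hG : Real.Gamma (2 * a) * Real.pi ^ 2 ≠ 0 :=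
    mul_ne_zero (Real.Gamma_pos_of_pos (by positivity)).ne' (by positivity)
  refine mul_left_cancel₀ hG ?_
  linear_combination h

theorem sin_mul_betaSeries_sub {a : ℝ} (ha : 0 < a) (ha' : a < 1 / 2) :
    Real.sin (Real.pi * a) * (betaSeries a (1 - 2 * a) - betaSeries (a + 1 / 2) (1 - 2 * a)) =
      2 ^ (1 - 4 * a) * (Real.cos (Real.pi * a) *
        (betaSeries (1 / 2 - a) (2 * a) - betaSeries (1 - a) (2 * a))) := by
  have hsin : 0 < Real.sin (Real.pi * a) :=
    Real.sin_pos_of_pos_of_lt_pi (by positivity) (by nlinarith [Real.pi_pos])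
  have hcos : 0 < Real.cos (Real.pi * a) :=
    Real.cos_pos_of_mem_Ioo ⟨by nlinarith [Real.pi_pos], by nlinarith [Real.pi_pos]⟩
  have hshift : Real.pi * (a + 1 / 2) = Real.pi * a + Real.pi / 2 := by ring
  have h := betaSeries_four_term (α := 2 * a) (a := a + 1 / 2) (c := a) (by linarith)
    (by linarith) (by linarith) (by linarith) ha (by linarith) (by ring)
    (by rw [hshift, Real.cos_add_pi_div_two]; exact neg_ne_zero.2 hsin.ne') hcos.ne'
  rw [hshift, Real.sin_add_pi_div_two, Real.cos_add_pi_div_two,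
    mul_right_comm (Real.Gamma (1 - 2 * a)),
    Gamma_mul_sin_mul_Gamma_sq_mul_cos_mul_Gamma_sq ha ha',
    show 1 - (a + 1 / 2) = 1 / 2 - a by ring] at h
  have hG : Real.Gamma (2 * a) * Real.pi ^ 2 ≠ 0 :=
    mul_ne_zero (Real.Gamma_pos_of_pos (by positivity)).ne' (by positivity)
  refine mul_left_cancel₀ hG ?_
  linear_combination h

theorem betaSeries_eq_sin_sub_cos {a : ℝ} (ha : 0 < a) (ha' : a < 1 / 2) :
    betaSeries a (1 - 2 * a) =
      2 ^ (1 - 4 * a) * Real.sin (2 * (Real.pi * a)) * betaSeries (1 / 2 - a) (2 * a) -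
        Real.cos (2 * (Real.pi * a)) * betaSeries (a + 1 / 2) (1 - 2 * a) := by
  rw [Real.sin_two_mul, Real.cos_two_mul']
  linear_combination Real.cos (Real.pi * a) * cos_mul_betaSeries_add ha ha' +
    Real.sin (Real.pi * a) * sin_mul_betaSeries_sub ha ha' -
    betaSeries a (1 - 2 * a) * Real.sin_sq_add_cos_sq (Real.pi * a)

theorem rpow_mul_betaSeries_one_sub {a : ℝ} (ha : 0 < a) (ha' : a < 1 / 2) :
    2 ^ (1 - 4 * a) * betaSeries (1 - a) (2 * a) =
      2 ^ (1 - 4 * a) * Real.cos (2 * (Real.pi * a)) * betaSeries (1 / 2 - a) (2 * a) +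
        Real.sin (2 * (Real.pi * a)) * betaSeries (a + 1 / 2) (1 - 2 * a) := by
  rw [Real.sin_two_mul, Real.cos_two_mul']
  linear_combination Real.cos (Real.pi * a) * sin_mul_betaSeries_sub ha ha' -
    Real.sin (Real.pi * a) * cos_mul_betaSeries_add ha ha' -
    2 ^ (1 - 4 * a) * betaSeries (1 - a) (2 * a) * Real.sin_sq_add_cos_sq (Real.pi * a)

/-! ### Hypergeometric values at rational parameters -/

theorem betaFn_mul_threeF2 {r s : ℝ} (hr : 0 < r) (hs : r < s) :
    betaFn r (s - r) * threeF2 (1 / 2) (1 / 2) r 1 s = betaSeries r (s - r) := by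
  have hs0 : 0 < s := hr.trans hs
  have hG := (Real.Gamma_pos_of_pos hs0).ne'
  rw [threeF2, ← tsum_mul_left]
  refine tsum_congr fun k => ?_
  have hk := (poch_pos hs0 k).ne'
  rw [betaFn, betaFn, pochCoeff, poch_one, show r + k + (s - r) = s + k by ring, add_sub_cancel,
    Gamma_add_natCast hr, Gamma_add_natCast hs0]
  field_simp

theorem two_mul_den_mul_Fval {r s : ℚ} (hr : 0 < r) (hs : r < s) :
    2 * (r.den : ℝ) * Fval r s = 2 ^ (1 - 4 * (r : ℝ)) * betaSeries r (s - r) := by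
  have : (r.den : ℝ) ≠ 0 := Nat.cast_ne_zero.2 r.den_ne_zero
  rw [Fval, ← betaFn_mul_threeF2 (by exact_mod_cast hr) (by exact_mod_cast hs)]
  field_simp

theorem two_mul_den_mul_Fval_one_sub {a : ℚ} (ha : 0 < a) (ha1 : a < 1) :
    2 * (a.den : ℝ) * (2 ^ (5 - 12 * a : ℝ) * Fval (1 - a) (1 + a)) =
      (2 ^ (1 - 4 * a : ℝ)) ^ 2 * betaSeries (1 - a) (2 * a) := by
  have hpow : (2 : ℝ) ^ (5 - 12 * a : ℝ) * 2 ^ (1 - 4 * (1 - a) : ℝ) =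
      (2 ^ (1 - 4 * a : ℝ)) ^ 2 := by
    rw [← Real.rpow_add two_pos, ← Real.rpow_mul_natCast two_pos.le]
    ring_nf
  have h := two_mul_den_mul_Fval (r := 1 - a) (s := 1 + a) (by linarith) (by linarith)
  have hden : (1 - a).den = a.den := by simp
  push_cast at h
  rw [hden, show (1 : ℝ) + a - (1 - a) = 2 * a by ring] at h
  linear_combination 2 ^ (5 - 12 * a : ℝ) * h + betaSeries (1 - a) (2 * a) * hpow

theorem two_mul_den_mul_Fval_half_sub {a : ℚ} (ha : 0 < a) (ha' : a < 1 / 2) :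
    2 * ((a + 1 / 2).den : ℝ) * (2 ^ (3 - 12 * a : ℝ) * Fval (1 / 2 - a) (1 / 2 + a)) =
      (2 ^ (1 - 4 * a : ℝ)) ^ 2 * betaSeries (1 / 2 - a) (2 * a) := by
  have hpow : (2 : ℝ) ^ (3 - 12 * a : ℝ) * 2 ^ (1 - 4 * (1 / 2 - a) : ℝ) =
      (2 ^ (1 - 4 * a : ℝ)) ^ 2 := by
    rw [← Real.rpow_add two_pos, ← Real.rpow_mul_natCast two_pos.le]
    ring_nf
  have h := two_mul_den_mul_Fval (r := 1 / 2 - a) (s := 1 / 2 + a) (by linarith) (by linarith)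
  have hden : (1 / 2 - a).den = (a + 1 / 2).den := by
    rw [← Rat.natCast_sub_den 1 (a + 1 / 2)]
    congr 1
    push_cast
    ring
  push_cast at h
  rw [hden, show (1 / 2 : ℝ) + a - (1 / 2 - a) = 2 * a by ring] at h
  linear_combination 2 ^ (3 - 12 * a : ℝ) * h + betaSeries (1 / 2 - a) (2 * a) * hpow

theorem two_mul_den_mul_Fval_add_half {a : ℚ} (ha : 0 < a) (ha' : a < 1 / 2) :
    2 * ((a + 1 / 2).den : ℝ) * (4 * Fval (a + 1 / 2) (3 / 2 - a)) =
      2 ^ (1 - 4 * a : ℝ) * betaSeries (a + 1 / 2) (1 - 2 * a) := by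
  have hpow : (4 : ℝ) * 2 ^ (1 - 4 * (a + 1 / 2) : ℝ) = 2 ^ (1 - 4 * a : ℝ) := by
    rw [show (1 - 4 * (a + 1 / 2) : ℝ) = 1 - 4 * a - (2 : ℕ) by push_cast; ring,
      Real.rpow_sub_natCast two_ne_zero]
    ring
  have h := two_mul_den_mul_Fval (r := a + 1 / 2) (s := 3 / 2 - a) (by linarith) (by linarith)
  push_cast at h
  rw [show (3 / 2 : ℝ) - a - (a + 1 / 2) = 1 - 2 * a by ring] at h
  linear_combination 4 * h + betaSeries (a + 1 / 2) (1 - 2 * a) * hpow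

theorem den_mul_Fval {a : ℚ} (ha : 0 < a) (ha' : a < 1 / 2) :
    a.den * Fval a (1 - a) = (a + 1 / 2).den *
      (Real.sin (2 * (Real.pi * a)) * (2 ^ (3 - 12 * a : ℝ) * Fval (1 / 2 - a) (1 / 2 + a)) -
        Real.cos (2 * (Real.pi * a)) * (4 * Fval (a + 1 / 2) (3 / 2 - a))) := by
  have h := two_mul_den_mul_Fval (r := a) (s := 1 - a) ha (by linarith)
  have hbeta := betaSeries_eq_sin_sub_cos (a := a) (by exact_mod_cast ha)
    (by rify at ha'; exact ha')
  push_cast at h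
  rw [show (1 : ℝ) - a - a = 1 - 2 * a by ring] at h
  linear_combination h / 2 + 2 ^ (1 - 4 * a : ℝ) / 2 * hbeta -
    Real.sin (2 * (Real.pi * a)) / 2 * two_mul_den_mul_Fval_half_sub ha ha' +
    Real.cos (2 * (Real.pi * a)) / 2 * two_mul_den_mul_Fval_add_half ha ha'

theorem den_mul_Fval_one_sub {a : ℚ} (ha : 0 < a) (ha' : a < 1 / 2) :
    a.den * (2 ^ (5 - 12 * a : ℝ) * Fval (1 - a) (1 + a)) = (a + 1 / 2).den *
      (Real.cos (2 * (Real.pi * a)) * (2 ^ (3 - 12 * a : ℝ) * Fval (1 / 2 - a) (1 / 2 + a)) +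
        Real.sin (2 * (Real.pi * a)) * (4 * Fval (a + 1 / 2) (3 / 2 - a))) := by
  have hbeta := rpow_mul_betaSeries_one_sub (a := a) (by exact_mod_cast ha)
    (by rify at ha'; exact ha')
  linear_combination two_mul_den_mul_Fval_one_sub ha (by linarith) / 2 +
    2 ^ (1 - 4 * a : ℝ) / 2 * hbeta -
    Real.cos (2 * (Real.pi * a)) / 2 * two_mul_den_mul_Fval_half_sub ha ha' -
    Real.sin (2 * (Real.pi * a)) / 2 * two_mul_den_mul_Fval_add_half ha ha'

theorem exp_two_pi_mul_quarter_sub (x : ℝ) :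
    Complex.exp (2 * Real.pi * Complex.I * (1 / 4 - x)) =
      Real.sin (2 * (Real.pi * x)) + Real.cos (2 * (Real.pi * x)) * Complex.I := by
  rw [show 2 * Real.pi * Complex.I * (1 / 4 - x) =
      ((Real.pi / 2 - 2 * (Real.pi * x) : ℝ) : ℂ) * Complex.I by push_cast; ring,
    Complex.exp_mul_I, ← Complex.ofReal_cos, ← Complex.ofReal_sin, Real.cos_pi_div_two_sub,
    Real.sin_pi_div_two_sub]

theorem three_term_class7_general {a : ℚ} (ha : 0 < a) (ha' : a < 1 / 2) :
    (a.den : ℂ) * (Fval a (1 - a) +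
        ((2 ^ (5 - 12 * a : ℝ) : ℝ) : ℂ) * Complex.I * Fval (1 - a) (1 + a)) =
      Complex.exp (2 * Real.pi * Complex.I * (1 / 4 - a)) * ((a + 1 / 2).den *
        (((2 ^ (3 - 12 * a : ℝ) : ℝ) : ℂ) * Fval (1 / 2 - a) (1 / 2 + a) +
          4 * Complex.I * Fval (a + 1 / 2) (3 / 2 - a))) := by
  have hre := congrArg Complex.ofReal (den_mul_Fval ha ha')
  have him := congrArg Complex.ofReal (den_mul_Fval_one_sub ha ha')
  have hexp := exp_two_pi_mul_quarter_sub a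
  simp only [Complex.ofReal_mul, Complex.ofReal_add, Complex.ofReal_sub, Complex.ofReal_natCast,
    Complex.ofReal_ofNat, Complex.ofReal_ratCast] at hre him hexp
  rw [hexp]
  linear_combination hre + Complex.I * him -
    4 * (a + 1 / 2).den * (Real.cos (2 * (Real.pi * a)) : ℂ) * Fval (a + 1 / 2) (3 / 2 - a) *
      Complex.I_sq

open Complex in
/-- F(1/8,7/8) + 8i√2·F(7/8,9/8) = ζ₈·(2√2·F(3/8,5/8) + 4i·F(5/8,11/8)),
where ζ₈ = e^{2πi/8}. -/
theorem three_term_class7 :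
    (Fval (1/8) (7/8) : ℂ) + 8 * I * (Real.sqrt 2 : ℂ) * (Fval (7/8) (9/8) : ℂ) =
      Complex.exp (2 * (Real.pi : ℂ) * I / 8) *
        (2 * (Real.sqrt 2 : ℂ) * (Fval (3/8) (5/8) : ℂ) +
          4 * I * (Fval (5/8) (11/8) : ℂ)) := by
  have hpow (n : ℕ) : (2 : ℝ) ^ (n + 1 / 2 : ℝ) = 2 ^ n * √2 := by
    rw [Real.rpow_add two_pos, Real.rpow_natCast, Real.sqrt_eq_rpow]
  have h₃ : (2 : ℝ) ^ (3 / 2 : ℝ) = 2 * √2 := by convert hpow 1 using 2 <;> norm_num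
  have h₇ : (2 : ℝ) ^ (7 / 2 : ℝ) = 8 * √2 := by convert hpow 3 using 2 <;> norm_num
  have h := three_term_class7_general (a := 1 / 8) (by norm_num) (by norm_num)
  norm_num [h₃, h₇, mul_one_div] at h
  linear_combination h / 8
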